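/- Distance update for the division-based step (regular algorithm), even case: let b ∈ [0,1) and let i ≥ 0 be even. Then d_{q_{i+1}+q_i}(b) = d_{q_i+q_{i−1}}(b) mod θ_i, i.e. the new distance is the remainder of the old distance upon division by θ_i (the unique representative in [0, θ_i)). -/

import Mathlib

/-- `dLeft a b n = min { {b - a·x} : 0 ≤ x < n }`, the distance from `b` to the nearest point
of the configuration `{a·x mod 1 : 0 ≤ x < n}` lying to its left (cyclically). -/
noncomputable def dLeft (a b : ℝ) (n : ℕ) : ℝ :=
  sInf {y : ℝ | ∃ x : ℕ, x < n ∧ y = Int.fract (b - a * x)}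

theorem aux_irr {a : ℝ} (hirr : Irrational a) (A B : ℤ) (h : (A : ℝ) - B * a = 0) :
    A = 0 ∧ B = 0 := by
  have hB : B = 0 := by
    by_contra hB
    have hB' : (B : ℝ) ≠ 0 := by exact_mod_cast hB
    apply hirr
    refine ⟨(A : ℚ) / B, ?_⟩
    push_cast
    field_simp
    linarith
  subst hB
  simp at h
  exact ⟨h, rfl⟩

theorem aux_inv (a : ℝ) (ha0 : 0 < a) 
    (hirr : Irrational a)
    (θ : ℕ → ℝ) (q k : ℕ → ℕ)
    (hθ0 : θ 0 = 1) (hθ1 : θ 1 = a)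
    (hq0 : q 0 = 0) (hq1 : q 1 = 1)
    (hk : ∀ i, (k (i + 1) : ℤ) = ⌊θ i / θ (i + 1)⌋)
    (hθrec : ∀ i, θ (i + 2) = θ i - (k (i + 1) : ℝ) * θ (i + 1))
    (hqrec : ∀ i, q (i + 2) = q i + k (i + 1) * q (i + 1)) (i : ℕ) :
    0 < θ i ∧ 0 < θ (i + 1) ∧ ∃ P R : ℤ, θ i = (-1) ^ i * (P - q i * a) ∧
      θ (i + 1) = (-1) ^ i * (q (i + 1) * a - R) ∧
      (q (i + 1) : ℤ) * P - q i * R = (-1) ^ i := by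
  induction i with
  | zero =>
    refine ⟨by simp [hθ0], by simpa [hθ1] using ha0, 1, 0, ?_, ?_, ?_⟩ <;>
      simp [hθ0, hθ1, hq0, hq1]
  | succ i ih =>
    obtain ⟨h0, h1, P, R, hP, hR, hd⟩ := ih
    have e2 : θ (i + 2) = (-1) ^ (i + 1) * (q (i + 2) * a - (P + k (i + 1) * R : ℤ)) := by
      rw [hθrec, hqrec, hP, hR]; push_cast; ring
    have d2 : (q (i + 2) : ℤ) * R - q (i + 1) * (P + k (i + 1) * R : ℤ) = (-1) ^ (i + 1) := by
      rw [hqrec, pow_succ, ← hd]; push_cast; ring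
    have nn : 0 ≤ θ (i + 2) := by
      have : (k (i + 1) : ℝ) ≤ θ i / θ (i + 1) := by
        have := Int.floor_le (θ i / θ (i + 1))
        rw [← hk] at this
        exact_mod_cast this
      rw [le_div_iff₀ h1] at this
      rw [hθrec]; linarith
    have ne : θ (i + 2) ≠ 0 := by
      intro h
      rw [e2] at h
      have h' : (q (i + 2) * a - (P + k (i + 1) * R : ℤ)) = 0 := by
        rcases mul_eq_zero.1 h with h | h
        · exact absurd h (pow_ne_zero _ (by norm_num))
        · exact h
      obtain ⟨hA, hB⟩ := aux_irr hirr (P + k (i + 1) * R) (q (i + 2)) (by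
        rw [Int.cast_natCast]; linarith)
      rw [hA, hB] at d2
      simp at d2
      exact absurd d2.symm (pow_ne_zero _ (by norm_num))
    refine ⟨h1, lt_of_le_of_ne nn ne.symm, R, P + k (i + 1) * R, ?_, e2, d2⟩
    rw [hR, pow_succ]; ring

theorem aux_mem (a b : ℝ) (n : ℕ) (hn : 0 < n) :
    ∃ x : ℕ, x < n ∧ dLeft a b n = Int.fract (b - a * x) := by
  have hf : {y : ℝ | ∃ x : ℕ, x < n ∧ y = Int.fract (b - a * x)}.Finite := by
    refine ((Finset.range n).finite_toSet.image
      (fun x : ℕ => Int.fract (b - a * x))).subset ?_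
    rintro y ⟨x, hx, rfl⟩
    exact ⟨x, by simpa using hx, rfl⟩
  have hne : {y : ℝ | ∃ x : ℕ, x < n ∧ y = Int.fract (b - a * x)}.Nonempty :=
    ⟨_, 0, hn, rfl⟩
  exact hne.csInf_mem hf

theorem aux_bdd (a b : ℝ) (n : ℕ) :
    BddBelow {y : ℝ | ∃ x : ℕ, x < n ∧ y = Int.fract (b - a * x)} := by
  refine ⟨0, ?_⟩
  rintro y ⟨x, -, rfl⟩
  exact Int.fract_nonneg _

theorem aux_le (a b : ℝ) (n x : ℕ) (hx : x < n) : dLeft a b n ≤ Int.fract (b - a * x) :=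
  csInf_le (aux_bdd a b n) ⟨x, hx, rfl⟩

/-- the old distance is less than `t0` -/
theorem aux_gap (a b t0 t1 : ℝ) (q0 q1 : ℕ) (P R : ℤ) (h0 : 0 < t0) (h1 : 0 < t1)
    (e0 : t0 = P - q0 * a) (e1 : t1 = q1 * a - R) (hn : 0 < q1 + q0) (hle : t1 ≤ t0) :
    dLeft a b (q1 + q0) < t0 := by
  obtain ⟨x, hx, hd⟩ := aux_mem a b _ hn
  by_contra! hc
  have hlt : Int.fract (b - a * x) < 1 := Int.fract_lt_one _
  have hfl := Int.self_sub_floor (b - a * x)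
  rcases lt_or_ge x q0 with h | h
  · have := aux_le a b (q1 + q0) (x + q1) (by omega)
    have e : Int.fract (b - a * (x + q1 : ℕ)) = Int.fract (b - a * x) - t1 := by
      rw [Int.fract_eq_iff]
      refine ⟨by linarith, by linarith, ⌊b - a * x⌋ - R, ?_⟩
      push_cast
      linarith
    linarith
  · have := aux_le a b (q1 + q0) (x - q0) (by omega)
    have e : Int.fract (b - a * (x - q0 : ℕ)) = Int.fract (b - a * x) - t0 := by
      rw [Int.fract_eq_iff]
      refine ⟨by linarith, by linarith, ⌊b - a * x⌋ + P, ?_⟩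
      push_cast [Nat.cast_sub h]
      linarith
    linarith

theorem aux_main (a b t0 t1 t2 : ℝ) (q0 q1 q2 k : ℕ) (P R : ℤ) (h0 : 0 < t0) (h1 : 0 < t1)
    (h2 : 0 < t2) (hk : (k : ℤ) = ⌊t0 / t1⌋)
    (e0 : t0 = P - q0 * a) (e1 : t1 = q1 * a - R) (hn : 0 < q1 + q0) (hle : t1 ≤ t0)
    (hdet : (q1 : ℤ) * P - q0 * R = 1) (et2 : t2 = t0 - k * t1) (eq2 : q2 = q0 + k * q1) :
    dLeft a b (q2 + q1) =
      dLeft a b (q1 + q0) - t1 * (⌊dLeft a b (q1 + q0) / t1⌋ : ℝ) := by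
  have hgap := aux_gap a b t0 t1 q0 q1 P R h0 h1 e0 e1 hn hle
  obtain ⟨x, hx, hd⟩ := aux_mem a b _ hn
  set d := dLeft a b (q1 + q0) with hddef
  have d0 : 0 ≤ d := by rw [hd]; exact Int.fract_nonneg _
  have d1 : d < 1 := by rw [hd]; exact Int.fract_lt_one _
  have hj0 : 0 ≤ ⌊d / t1⌋ := Int.floor_nonneg.2 (by positivity)
  have hjk : ⌊d / t1⌋ ≤ k := by
    rw [hk]; exact Int.floor_le_floor (by gcongr)
  obtain ⟨j, hj⟩ := Int.eq_ofNat_of_zero_le hj0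
  have hfl := Int.floor_le (d / t1)
  have hfl2 := Int.lt_floor_add_one (d / t1)
  rw [hj] at hfl hfl2 hjk ⊢
  have hjk' : j ≤ k := by exact_mod_cast hjk
  rw [Int.cast_natCast] at *
  rw [le_div_iff₀ h1] at hfl
  rw [div_lt_iff₀ h1] at hfl2
  have hself := Int.self_sub_floor (b - a * x)
  have hjq : j * q1 ≤ k * q1 := Nat.mul_le_mul_right _ hjk'
  have hjt : 0 ≤ (j : ℝ) * t1 := by positivity
  set r := d - t1 * j with hr
  have er : Int.fract (b - a * (x + j * q1 : ℕ)) = r := by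
    rw [Int.fract_eq_iff]
    refine ⟨by linarith, by linarith, ⌊b - a * x⌋ - j * R, ?_⟩
    push_cast
    rw [hr, hd, e1, ← hself]
    ring
  have hXlt : x + j * q1 < q2 + q1 := by rw [eq2]; omega
  apply IsLeast.csInf_eq
  refine ⟨⟨x + j * q1, hXlt, er.symm⟩, ?_⟩
  rintro s ⟨y, hy, hs⟩
  by_contra! hc
  have s0 : 0 ≤ s := by rw [hs]; exact Int.fract_nonneg _
  have hsf := Int.self_sub_floor (b - a * y)
  have hrf := Int.self_sub_floor (b - a * (x + j * q1 : ℕ))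
  set X := x + j * q1 with hX
  obtain ⟨m, hm⟩ : ∃ m : ℤ, m = y - X := ⟨_, rfl⟩
  obtain ⟨p, hp⟩ : ∃ p : ℤ, p = ⌊b - a * X⌋ - ⌊b - a * y⌋ := ⟨_, rfl⟩
  have hmp : r - s = m * a - p := by
    rw [hm, hp, ← er, hs, ← hsf, ← hrf]; push_cast; ring
  obtain ⟨S, hS⟩ : ∃ S : ℤ, S = P + k * R := ⟨_, rfl⟩
  have e2 : t2 = S - q2 * a := by rw [et2, hS, eq2, e0, e1]; push_cast; ring
  have det2 : (q1 : ℤ) * S - q2 * R = 1 := by rw [hS, eq2, ← hdet]; push_cast; ring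
  obtain ⟨u, hu⟩ : ∃ u : ℤ, u = m * S - p * q2 := ⟨_, rfl⟩
  obtain ⟨v, hv⟩ : ∃ v : ℤ, v = q1 * p - R * m := ⟨_, rfl⟩
  have em : m = u * q1 + v * q2 := by
    rw [hu, hv]; linear_combination (-m) * det2
  have ep : p = u * R + v * S := by
    rw [hu, hv]; linear_combination (-p) * det2
  have emt : r - s = u * t1 - v * t2 := by
    rw [hmp, em, ep, e1, e2]; push_cast; ring
  have hmu : m < q2 + q1 := by omega
  have hml : -(q2 + q1 : ℤ) < m := by omega
  have hq1 : (0 : ℤ) ≤ q1 := by positivity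
  have hq2 : (0 : ℤ) ≤ q2 := by positivity
  have hrt : r - s < t1 := by linarith
  have hrp : 0 < r - s := by linarith
  rcases lt_trichotomy v 0 with hv0 | hv0 | hv0
  · have hv1 : v ≤ -1 := by omega
    have hv' : (v : ℝ) ≤ -1 := by exact_mod_cast hv1
    have hvt := mul_le_mul_of_nonneg_right hv' h2.le
    have hvq := mul_le_mul_of_nonneg_right hv1 hq2
    have hu0 : u < 1 := by
      by_contra! hu1
      have hu' : (1 : ℝ) ≤ u := by exact_mod_cast hu1
      have := mul_le_mul_of_nonneg_right hu' h1.le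
      linarith
    rcases lt_or_eq_of_le (by omega : u ≤ 0) with hu1 | hu1
    · have := mul_le_mul_of_nonneg_right (by omega : u ≤ -1) hq1
      linarith
    · rw [hu1] at em emt
      have hXq : (q2 : ℤ) ≤ X := by linarith [Int.natCast_nonneg y]
      have hXq' : q2 ≤ X := by exact_mod_cast hXq
      have hrt2 : t2 ≤ r := by
        rw [Int.cast_zero] at emt
        linarith
      have hjk2 : j = k := by
        by_contra hne
        have : (j + 1) * q1 ≤ k * q1 := Nat.mul_le_mul_right _ (by omega)
        rw [add_mul] at this
        omega
      rw [← hjk2] at et2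
      linarith
  · rw [hv0, Int.cast_zero] at emt
    have hu1 : 0 < u := by
      by_contra! hu1
      have hu' : (u : ℝ) ≤ 0 := by exact_mod_cast hu1
      have := mul_le_mul_of_nonneg_right hu' h1.le
      linarith
    have hu' : (1 : ℝ) ≤ u := by exact_mod_cast hu1
    have := mul_le_mul_of_nonneg_right hu' h1.le
    linarith
  · have hv' : (1 : ℝ) ≤ v := by exact_mod_cast hv0
    have hvt := mul_le_mul_of_nonneg_right hv' h2.le
    have hvq := mul_le_mul_of_nonneg_right (by omega : 1 ≤ v) hq2
    have hu1 : 0 < u := by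
      by_contra! hu1
      have hu' : (u : ℝ) ≤ 0 := by exact_mod_cast hu1
      have := mul_le_mul_of_nonneg_right hu' h1.le
      linarith
    have := mul_le_mul_of_nonneg_right (by omega : 1 ≤ u) hq1
    linarith

/-- **Distance update for the division-based step (regular algorithm), even case.**
Indexing is shifted by one: `θ (m+1)`, `q (m+1)` denote the mathematical `θ_m`, `q_m`
(so `θ 0 = θ₋₁ = 1`, `θ 1 = θ₀ = a`, `q 0 = q₋₁ = 0`, `q 1 = q₀ = 1`), and `k (i+1) = k_{i+1}`.
For `b ∈ [0,1)` and `i` even: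
`d_{q_{i+1}+q_i}(b) = d_{q_i+q_{i-1}}(b) mod θ_i`, the remainder being the unique
representative in `[0, θ_i)`, i.e. `d_old - θ_i·⌊d_old / θ_i⌋`. -/
theorem distance_update_division_even (a : ℝ) (ha0 : 0 < a) (ha1 : a < 1)
    (hirr : Irrational a)
    (θ : ℕ → ℝ) (q k : ℕ → ℕ)
    (hθ0 : θ 0 = 1) (hθ1 : θ 1 = a)
    (hq0 : q 0 = 0) (hq1 : q 1 = 1)
    (hk : ∀ i, (k (i + 1) : ℤ) = ⌊θ i / θ (i + 1)⌋)
    (hθrec : ∀ i, θ (i + 2) = θ i - (k (i + 1) : ℝ) * θ (i + 1))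
    (hqrec : ∀ i, q (i + 2) = q i + k (i + 1) * q (i + 1))
    (b : ℝ) (hb0 : 0 ≤ b) (hb1 : b < 1)
    (i : ℕ) (hi : Even i) :
    dLeft a b (q (i + 2) + q (i + 1)) =
      dLeft a b (q (i + 1) + q i) -
        θ (i + 1) * (⌊dLeft a b (q (i + 1) + q i) / θ (i + 1)⌋ : ℝ) := by
  obtain ⟨h0, h1, P, R, hP, hR, hd⟩ :=
    aux_inv a ha0 hirr θ q k hθ0 hθ1 hq0 hq1 hk hθrec hqrec i
  obtain ⟨-, h2, -⟩ :=
    aux_inv a ha0 hirr θ q k hθ0 hθ1 hq0 hq1 hk hθrec hqrec (i + 1)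
  rw [hi.neg_one_pow] at hP hR hd
  rw [one_mul] at hP hR
  have hn : 0 < q (i + 1) + q i := by
    rcases Nat.eq_zero_or_pos (q (i + 1) + q i) with h | h
    · have hA : q (i + 1) = 0 := by omega
      have hB : q i = 0 := by omega
      rw [hA, hB] at hd
      simp at hd
    · exact h
  have hle : θ (i + 1) ≤ θ i := by
    have hanti : ∀ m, θ (m + 1) ≤ θ m := by
      intro m
      cases m with
      | zero => rw [hθ0, hθ1]; exact ha1.le
      | succ m =>
        obtain ⟨-, g1, -⟩ := aux_inv a ha0 hirr θ q k hθ0 hθ1 hq0 hq1 hk hθrec hqrec m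
        have := Int.lt_floor_add_one (θ m / θ (m + 1))
        rw [← hk, div_lt_iff₀ g1, Int.cast_natCast] at this
        have := hθrec m
        show θ (m + 2) ≤ _
        linarith
    exact hanti i
  exact aux_main a b _ _ _ _ _ _ _ P R h0 h1 h2 (hk i) hP hR hn hle hd (hθrec i) (hqrec i)
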